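/- In the CreditRisk⁺ model, for every j = 1,…,k and every real z with 0 < z < ρ_g, the probability generating functions at the original and shifted parameters are related by g_{α(j)}(z) = g_α(z) / (1 + β_j − β_j Σ_{h=1}^n r_{j,h} z^{ν_h}), where g_α(z) = E_α[z^L] and g_{α(j)}(z) = E_{α(j)}[z^L]. -/

import Mathlib

open MeasureTheory ProbabilityTheory Real

noncomputable section

/-- The gamma measure is sigma-finite (needed to form product measures). -/
instance gammaMeasure.instSigmaFinite (a r : ℝ) :
    SigmaFinite (gammaMeasure a r) := by
  unfold ProbabilityTheory.gammaMeasure ProbabilityTheory.gammaPDF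
  infer_instance

/-- Conditional Poisson intensity `R_i(s) = r_{0,i} S_0 + sum_j r_{j,i} s_j`. -/
def crpR {n k : ℕ} (S0 : ℝ) (r0 : Fin n → ℝ) (r : Fin k → Fin n → ℝ)
    (s : Fin k → ℝ) (i : Fin n) : ℝ :=
  r0 i * S0 + ∑ j, r j i * s j

/-- The CreditRisk⁺ measure `P_α` on `(Fin k → ℝ) × (Fin n → ℕ)`: the product of the
Gamma factor measures (shape `α j`, scale `β j`, i.e. rate `(β j)⁻¹`), composed with the
kernel sending the factor vector `s` to the product of Poisson measures with means `R_i(s)`,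
recorded jointly with `s`. -/
def crpMeasure {n k : ℕ} (S0 : ℝ) (r0 : Fin n → ℝ) (r : Fin k → Fin n → ℝ)
    (α β : Fin k → ℝ) : Measure ((Fin k → ℝ) × (Fin n → ℕ)) :=
  (Measure.pi fun j => gammaMeasure (α j) (β j)⁻¹).bind fun s =>
    (Measure.pi fun i => poissonMeasure (crpR S0 r0 r s i).toNNReal).map fun x => (s, x)

/-- Portfolio loss `L = ∑ ν_i N_i`. -/
def crpLoss {n k : ℕ} (ν : Fin n → ℕ) (x : (Fin k → ℝ) × (Fin n → ℕ)) : ℕ :=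
  ∑ i, ν i * x.2 i

/-- Value-at-risk of the ℕ-valued loss `L` at level `δ`: the smallest `l` with
`P[L ≤ l] ≥ δ` (a natural number since `L` is ℕ-valued). -/
def crpVaR {n k : ℕ} (P : Measure ((Fin k → ℝ) × (Fin n → ℕ)))
    (ν : Fin n → ℕ) (δ : ℝ) : ℕ :=
  sInf {l : ℕ | ENNReal.ofReal δ ≤ P {x | crpLoss ν x ≤ l}}

/-- `ρ_g`, the radius of convergence of the probability generating function. -/
def crpRadius {n k : ℕ} (ν : Fin n → ℕ) (r : Fin k → Fin n → ℝ) (β : Fin k → ℝ) : ℝ :=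
  sSup {z : ℝ | 0 < z ∧ ∀ j, ∑ i, r j i * z ^ ν i < 1 + (β j)⁻¹}

/-! Given the factors `S = s`, the counts are independent Poisson variables, so
`E[∏ᵢ wᵢ ^ Nᵢ | S = s] = exp (∑ᵢ Rᵢ(s) (wᵢ - 1))`. Since `Rᵢ` is affine in `s`, this is a
constant times `exp (∑ⱼ tⱼ sⱼ)` with `tⱼ = ∑ᵢ rⱼᵢ (wᵢ - 1)`, and the independent Gamma factors
integrate it to a constant times `∏ⱼ (1 - βⱼ tⱼ) ^ (-αⱼ)`. Increasing `αⱼ` by one therefore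
divides the joint generating function by `1 - βⱼ tⱼ`; the loss corresponds to `wᵢ = z ^ νᵢ`. -/

section Products

variable {ι : Type*} [Fintype ι] {X : ι → Type*} [∀ i, MeasurableSpace (X i)]

lemma measurable_prod_pow_snd {Ω M : Type*} [MeasurableSpace Ω] [CommMonoid M] [MeasurableSpace M]
    (w : ι → M) :
    Measurable fun x : Ω × (ι → ℕ) => ∏ i, w i ^ x.2 i :=
  (measurable_of_countable fun m : ι → ℕ => ∏ i, w i ^ m i).comp measurable_snd

lemma lintegral_prod_eval_pi (μ : ∀ i, Measure (X i)) [∀ i, IsProbabilityMeasure (μ i)]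
    {f : ∀ i, X i → ENNReal} (hf : ∀ i, Measurable (f i)) :
    ∫⁻ x, ∏ i, f i (x i) ∂(Measure.pi μ) = ∏ i, ∫⁻ y, f i y ∂(μ i) :=
  calc ∫⁻ x, ∏ i, f i (x i) ∂(Measure.pi μ)
      = ∏ i, ∫⁻ x, f i (x i) ∂(Measure.pi μ) :=
        lintegral_prod_eq_prod_lintegral_of_indepFun Finset.univ (fun i (x : ∀ i, X i) => f i (x i))
          (iIndepFun_pi fun i => (hf i).aemeasurable)
          fun i => (hf i).comp (measurable_pi_apply i)
    _ = ∏ i, ∫⁻ y, f i y ∂(μ i) :=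
        Finset.prod_congr rfl fun i _ => (measurePreserving_eval μ i).lintegral_comp (hf i)

lemma measurable_measure_pi {Ω : Type*} [MeasurableSpace Ω] {μ : ∀ i, Ω → Measure (X i)}
    [∀ i ω, IsProbabilityMeasure (μ i ω)] (hμ : ∀ i, Measurable (μ i)) :
    Measurable fun ω => Measure.pi fun i => μ i ω := by
  refine Measurable.measure_of_isPiSystem_of_isProbabilityMeasure generateFrom_pi.symm
    isPiSystem_pi ?_
  rintro _ ⟨t, ht, rfl⟩
  simp only [Measure.pi_pi]
  exact Finset.univ.measurable_fun_prod fun i _ =>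
    (Measure.measurable_coe (ht i (Set.mem_univ i))).comp (hμ i)

end Products

section PoissonGamma

lemma measurable_poissonMeasure : Measurable poissonMeasure := by
  refine Measure.measurable_of_measurable_coe _ fun s hs => ?_
  simp only [poissonMeasure, Measure.sum_apply _ hs, Measure.smul_apply, smul_eq_mul]
  fun_prop

lemma lintegral_pow_poissonMeasure (l : NNReal) {w : ℝ} (hw : 0 ≤ w) :
    ∫⁻ m, ENNReal.ofReal (w ^ m) ∂(poissonMeasure l) = ENNReal.ofReal (exp (l * (w - 1))) := by
  have h_sum : HasSum (fun m : ℕ => w ^ m * (exp (-l) * l ^ m / m.factorial))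
      (exp (l * (w - 1))) := by
    convert! (NormedSpace.expSeries_div_hasSum_exp (w * l : ℝ)).mul_left (exp (-l)) using 1
    · funext m
      ring
    · rw [← exp_eq_exp_ℝ, ← exp_add]
      ring_nf
  rw [lintegral_countable', ← h_sum.tsum_eq,
    ENNReal.ofReal_tsum_of_nonneg (fun m => by positivity) h_sum.summable]
  refine tsum_congr fun m => ?_
  rw [poissonMeasure_singleton, ENNReal.ofReal_mul (by positivity)]

lemma measurable_gammaPDF (a b : ℝ) : Measurable (gammaPDF a b) :=
  (measurable_gammaPDFReal a b).ennreal_ofReal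

lemma ae_nonneg_gammaMeasure (a b : ℝ) : ∀ᵐ x ∂(gammaMeasure a b), 0 ≤ x := by
  rw [gammaMeasure, ae_withDensity_iff (measurable_gammaPDF a b)]
  exact .of_forall fun x hx => not_lt.1 fun hneg => hx (gammaPDF_of_neg hneg)

lemma gammaPDF_mul_exp {a b t : ℝ} (ha : 0 < a) (hb : 0 < b) (ht : t < b) (x : ℝ) :
    gammaPDF a b x * ENNReal.ofReal (exp (t * x)) =
      ENNReal.ofReal ((1 - t / b)⁻¹ ^ a) * gammaPDF a (b - t) x := by
  rcases lt_or_ge x 0 with hx | hx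
  · simp [gammaPDF_of_neg hx]
  have hbt : 0 < b - t := sub_pos.2 ht
  have h_base : (1 - t / b)⁻¹ = b / (b - t) := by
    rw [one_sub_div hb.ne', inv_div]
  have h_exp : exp (-((b - t) * x)) = exp (-(b * x)) * exp (t * x) := by
    rw [← exp_add]
    ring_nf
  rw [h_base, gammaPDF_of_nonneg hx, gammaPDF_of_nonneg hx, ← ENNReal.ofReal_mul (by positivity),
    ← ENNReal.ofReal_mul (by positivity), div_rpow hb.le hbt.le, h_exp]
  congr 1
  field_simp [(Gamma_pos_of_pos ha).ne']

lemma lintegral_exp_mul_gammaMeasure {a b t : ℝ} (ha : 0 < a) (hb : 0 < b) (ht : t < b) :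
    ∫⁻ x, ENNReal.ofReal (exp (t * x)) ∂(gammaMeasure a b) =
      ENNReal.ofReal ((1 - t / b)⁻¹ ^ a) := by
  rw [gammaMeasure, lintegral_withDensity_eq_lintegral_mul _ (measurable_gammaPDF a b)
    (by fun_prop)]
  simp only [Pi.mul_apply, gammaPDF_mul_exp ha hb ht]
  rw [lintegral_const_mul _ (measurable_gammaPDF a (b - t)),
    lintegral_gammaPDF_eq_one ha (sub_pos.2 ht), mul_one]

lemma lintegral_exp_sum_pi_gammaMeasure {ι : Type*} [Fintype ι] {a b t : ι → ℝ}
    (ha : ∀ j, 0 < a j) (hb : ∀ j, 0 < b j) (ht : ∀ j, t j < b j) :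
    ∫⁻ s, ENNReal.ofReal (exp (∑ j, t j * s j)) ∂(Measure.pi fun j => gammaMeasure (a j) (b j)) =
      ENNReal.ofReal (∏ j, (1 - t j / b j)⁻¹ ^ a j) := by
  have := fun j => isProbabilityMeasure_gammaMeasure (ha j) (hb j)
  have h_base (j : ι) : 0 ≤ (1 - t j / b j)⁻¹ :=
    inv_nonneg.2 (sub_nonneg.2 ((div_lt_one (hb j)).2 (ht j)).le)
  simp only [exp_sum, ENNReal.ofReal_prod_of_nonneg fun _ _ => (exp_pos _).le,
    ENNReal.ofReal_prod_of_nonneg fun j _ => rpow_nonneg (h_base j) _]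
  rw [lintegral_prod_eval_pi _ (f := fun j x => ENNReal.ofReal (exp (t j * x)))
    fun _ => by fun_prop]
  exact Finset.prod_congr rfl fun j _ => lintegral_exp_mul_gammaMeasure (ha j) (hb j) (ht j)

end PoissonGamma

section Algebra

variable {ι : Type*} [Fintype ι]

lemma prod_rpow_update_add_one [DecidableEq ι] {x : ι → ℝ} (a : ι → ℝ) {j : ι} (hx : x j ≠ 0) :
    ∏ i, x i ^ Function.update a j (a j + 1) i = (∏ i, x i ^ a i) * x j := by
  have h_off : ∀ i ∈ ({j}ᶜ : Finset ι), x i ^ Function.update a j (a j + 1) i = x i ^ a i :=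
    fun i hi => by rw [Function.update_of_ne (by simpa using hi)]
  rw [Fintype.prod_eq_mul_prod_compl j, Fintype.prod_eq_mul_prod_compl j, Function.update_self,
    rpow_add_one hx, Finset.prod_congr rfl h_off, mul_right_comm]

lemma one_sub_mul_pos_of_lt_inv {b t : ℝ} (hb : 0 < b) (ht : t < b⁻¹) : 0 < 1 - b * t :=
  sub_pos.2 ((lt_inv_mul_iff₀ hb).1 (by simpa using ht))

lemma one_sub_mul_sum_mul_sub_one {p : ι → ℝ} (hp : ∑ i, p i = 1) (b : ℝ) (c : ι → ℝ) :
    1 - b * ∑ i, p i * (c i - 1) = 1 + b - b * ∑ i, p i * c i := by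
  simp only [mul_sub, mul_one, Finset.sum_sub_distrib, hp]
  ring

end Algebra

section CreditRisk

variable {n k : ℕ} {S0 : ℝ} {r0 : Fin n → ℝ} {r : Fin k → Fin n → ℝ}

lemma crpR_nonneg (hS0 : 0 ≤ S0) (hr0 : ∀ i, 0 ≤ r0 i) (hr : ∀ j i, 0 ≤ r j i)
    {s : Fin k → ℝ} (hs : ∀ j, 0 ≤ s j) (i : Fin n) : 0 ≤ crpR S0 r0 r s i :=
  add_nonneg (mul_nonneg (hr0 i) hS0) (Finset.sum_nonneg fun j _ => mul_nonneg (hr j i) (hs j))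

lemma measurable_crpR (S0 : ℝ) (r0 : Fin n → ℝ) (r : Fin k → Fin n → ℝ) (i : Fin n) :
    Measurable fun s => crpR S0 r0 r s i := by
  unfold crpR
  fun_prop

lemma sum_crpR_mul (S0 : ℝ) (r0 : Fin n → ℝ) (r : Fin k → Fin n → ℝ) (s : Fin k → ℝ)
    (c : Fin n → ℝ) :
    ∑ i, crpR S0 r0 r s i * c i = S0 * ∑ i, r0 i * c i + ∑ j, (∑ i, r j i * c i) * s j := by
  simp only [crpR, add_mul, Finset.sum_add_distrib, Finset.sum_mul, Finset.mul_sum]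
  rw [Finset.sum_comm]
  exact congrArg₂ (· + ·) (Finset.sum_congr rfl fun i _ => by ring)
    (Finset.sum_congr rfl fun j _ => Finset.sum_congr rfl fun i _ => by ring)

/-- The conditional law of the counts `N` given the factors `S = s`. -/
def crpCountKernel (S0 : ℝ) (r0 : Fin n → ℝ) (r : Fin k → Fin n → ℝ) :
    Kernel (Fin k → ℝ) (Fin n → ℕ) where
  toFun s := Measure.pi fun i => poissonMeasure (crpR S0 r0 r s i).toNNReal
  measurable' := measurable_measure_pi fun i =>
    measurable_poissonMeasure.comp (measurable_crpR S0 r0 r i).real_toNNReal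

instance crpCountKernel.instIsMarkovKernel : IsMarkovKernel (crpCountKernel S0 r0 r) :=
  ⟨fun s => inferInstanceAs <| IsProbabilityMeasure <|
    Measure.pi fun i => poissonMeasure (crpR S0 r0 r s i).toNNReal⟩

lemma crpMeasure_eq_compProd (α β : Fin k → ℝ) :
    crpMeasure S0 r0 r α β =
      (Measure.pi fun j => gammaMeasure (α j) (β j)⁻¹) ⊗ₘ crpCountKernel S0 r0 r := by
  rw [Measure.compProd_eq_comp_prod, crpMeasure]
  congr 1
  funext s
  rw [Kernel.prod_apply, Kernel.id_apply, Measure.dirac_prod]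
  rfl

lemma lintegral_prod_pow_crpCountKernel (hS0 : 0 ≤ S0) (hr0 : ∀ i, 0 ≤ r0 i)
    (hr : ∀ j i, 0 ≤ r j i) {s : Fin k → ℝ} (hs : ∀ j, 0 ≤ s j) {w : Fin n → ℝ}
    (hw : ∀ i, 0 ≤ w i) :
    ∫⁻ x, ENNReal.ofReal (∏ i, w i ^ x i) ∂(crpCountKernel S0 r0 r s) =
      ENNReal.ofReal (exp (∑ i, crpR S0 r0 r s i * (w i - 1))) := by
  simp only [ENNReal.ofReal_prod_of_nonneg fun i _ => pow_nonneg (hw i) _, exp_sum,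
    ENNReal.ofReal_prod_of_nonneg fun _ _ => (exp_pos _).le]
  refine (lintegral_prod_eval_pi _ (f := fun i m => ENNReal.ofReal (w i ^ m))
    fun _ => measurable_of_countable _).trans ?_
  refine Finset.prod_congr rfl fun i _ => ?_
  rw [lintegral_pow_poissonMeasure _ (hw i), coe_toNNReal _ (crpR_nonneg hS0 hr0 hr hs i)]

lemma lintegral_prod_pow_crpMeasure (hS0 : 0 ≤ S0) (hr0 : ∀ i, 0 ≤ r0 i) (hr : ∀ j i, 0 ≤ r j i)
    {α β : Fin k → ℝ} (hα : ∀ j, 0 < α j) (hβ : ∀ j, 0 < β j) {w : Fin n → ℝ}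
    (hw : ∀ i, 0 ≤ w i) (hwβ : ∀ j, ∑ i, r j i * (w i - 1) < (β j)⁻¹) :
    ∫⁻ x, ENNReal.ofReal (∏ i, w i ^ x.2 i) ∂(crpMeasure S0 r0 r α β) =
      ENNReal.ofReal (exp (S0 * ∑ i, r0 i * (w i - 1)) *
        ∏ j, (1 - β j * ∑ i, r j i * (w i - 1))⁻¹ ^ α j) := by
  have h_nonneg : ∀ᵐ s ∂(Measure.pi fun j => gammaMeasure (α j) (β j)⁻¹), ∀ j, 0 ≤ s j :=
    Filter.eventually_all.2 fun j =>
      Measure.tendsto_eval_ae_ae.eventually (ae_nonneg_gammaMeasure (α j) (β j)⁻¹)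
  have h_cond : ∀ s : Fin k → ℝ, (∀ j, 0 ≤ s j) →
      ∫⁻ x, ENNReal.ofReal (∏ i, w i ^ x i) ∂(crpCountKernel S0 r0 r s) =
        ENNReal.ofReal (exp (S0 * ∑ i, r0 i * (w i - 1))) *
          ENNReal.ofReal (exp (∑ j, (∑ i, r j i * (w i - 1)) * s j)) := fun s hs => by
    rw [lintegral_prod_pow_crpCountKernel hS0 hr0 hr hs hw, sum_crpR_mul, exp_add,
      ENNReal.ofReal_mul (exp_pos _).le]
  rw [crpMeasure_eq_compProd, Measure.lintegral_compProd (measurable_prod_pow_snd w).ennreal_ofReal,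
    lintegral_congr_ae (h_nonneg.mono h_cond), lintegral_const_mul' _ _ ENNReal.ofReal_ne_top,
    lintegral_exp_sum_pi_gammaMeasure hα (fun j => inv_pos.2 (hβ j)) hwβ,
    ← ENNReal.ofReal_mul (exp_pos _).le]
  simp only [div_inv_eq_mul, mul_comm]

lemma integral_prod_pow_crpMeasure (hS0 : 0 ≤ S0) (hr0 : ∀ i, 0 ≤ r0 i) (hr : ∀ j i, 0 ≤ r j i)
    {α β : Fin k → ℝ} (hα : ∀ j, 0 < α j) (hβ : ∀ j, 0 < β j) {w : Fin n → ℝ}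
    (hw : ∀ i, 0 ≤ w i) (hwβ : ∀ j, ∑ i, r j i * (w i - 1) < (β j)⁻¹) :
    ∫ x, ∏ i, w i ^ x.2 i ∂(crpMeasure S0 r0 r α β) =
      exp (S0 * ∑ i, r0 i * (w i - 1)) *
        ∏ j, (1 - β j * ∑ i, r j i * (w i - 1))⁻¹ ^ α j := by
  rw [integral_eq_lintegral_of_nonneg_ae
      (.of_forall fun x => Finset.prod_nonneg fun i _ => pow_nonneg (hw i) _)
      (measurable_prod_pow_snd w).aestronglyMeasurable,
    lintegral_prod_pow_crpMeasure hS0 hr0 hr hα hβ hw hwβ, ENNReal.toReal_ofReal]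
  exact mul_nonneg (exp_pos _).le
    (Finset.prod_nonneg fun j _ =>
      rpow_nonneg (inv_pos.2 (one_sub_mul_pos_of_lt_inv (hβ j) (hwβ j))).le _)

theorem crp_pgf_shift_general (hS0 : 0 ≤ S0) (hr0 : ∀ i, 0 ≤ r0 i) (hr : ∀ j i, 0 ≤ r j i)
    {α β : Fin k → ℝ} (hα : ∀ j, 0 < α j) (hβ : ∀ j, 0 < β j) {w : Fin n → ℝ}
    (hw : ∀ i, 0 ≤ w i) (hwβ : ∀ j, ∑ i, r j i * (w i - 1) < (β j)⁻¹) (j : Fin k) :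
    ∫ x, ∏ i, w i ^ x.2 i ∂(crpMeasure S0 r0 r (Function.update α j (α j + 1)) β) =
      (∫ x, ∏ i, w i ^ x.2 i ∂(crpMeasure S0 r0 r α β)) /
        (1 - β j * ∑ i, r j i * (w i - 1)) := by
  have hα' : ∀ l, 0 < Function.update α j (α j + 1) l :=
    (Function.forall_update_iff α fun _ a => 0 < a).2 ⟨add_pos (hα j) one_pos, fun l _ => hα l⟩
  rw [integral_prod_pow_crpMeasure hS0 hr0 hr hα' hβ hw hwβ,
    integral_prod_pow_crpMeasure hS0 hr0 hr hα hβ hw hwβ,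
    prod_rpow_update_add_one α (inv_pos.2 (one_sub_mul_pos_of_lt_inv (hβ j) (hwβ j))).ne',
    ← mul_assoc, div_eq_mul_inv]

lemma pow_crpLoss {M : Type*} [CommMonoid M] (z : M) (ν : Fin n → ℕ)
    (x : (Fin k → ℝ) × (Fin n → ℕ)) : z ^ crpLoss ν x = ∏ i, (z ^ ν i) ^ x.2 i := by
  simp only [crpLoss, ← pow_mul, Finset.prod_pow_eq_pow_sum]

lemma sum_mul_pow_lt_of_lt_crpRadius {ν : Fin n → ℕ} (hr : ∀ j i, 0 ≤ r j i) {β : Fin k → ℝ}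
    {z : ℝ} (hz0 : 0 < z) (hzρ : z < crpRadius ν r β) (j : Fin k) :
    ∑ i, r j i * z ^ ν i < 1 + (β j)⁻¹ := by
  -- If this set were empty, `crpRadius` would take the junk value `sSup ∅ = 0`.
  have h_ne : {z : ℝ | 0 < z ∧ ∀ j, ∑ i, r j i * z ^ ν i < 1 + (β j)⁻¹}.Nonempty := by
    by_contra h_empty
    rw [crpRadius, Set.not_nonempty_iff_eq_empty.1 h_empty, sSup_empty] at hzρ
    exact hz0.not_gt hzρ
  obtain ⟨y, ⟨-, hy⟩, hzy⟩ := exists_lt_of_lt_csSup h_ne hzρ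
  calc ∑ i, r j i * z ^ ν i
      ≤ ∑ i, r j i * y ^ ν i := Finset.sum_le_sum fun i _ =>
        mul_le_mul_of_nonneg_left (pow_le_pow_left₀ hz0.le hzy.le _) (hr j i)
    _ < 1 + (β j)⁻¹ := hy j

lemma sum_mul_pow_sub_one_lt_of_lt_crpRadius {ν : Fin n → ℕ} (hr : ∀ j i, 0 ≤ r j i)
    (hrsum : ∀ j, ∑ i, r j i = 1) {β : Fin k → ℝ} {z : ℝ} (hz0 : 0 < z)
    (hzρ : z < crpRadius ν r β) (j : Fin k) : ∑ i, r j i * (z ^ ν i - 1) < (β j)⁻¹ := by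
  simp only [mul_sub, mul_one, Finset.sum_sub_distrib, hrsum]
  exact sub_lt_iff_lt_add'.2 (sum_mul_pow_lt_of_lt_crpRadius hr hz0 hzρ j)

end CreditRisk

/-- for `0 < z < ρ_g` and each sector `j`,
`g_{α(j)}(z) = g_α(z) / (1 + β_j − β_j ∑_h r_{j,h} z^{ν_h})`, where `α(j)` has the `j`-th
shape parameter increased by `1`. -/
theorem crp_pgf_shift {n k : ℕ} (hn : 0 < n) (hk : 0 < k)
    (ν : Fin n → ℕ) (hν : ∀ i, 0 < ν i)
    (S0 : ℝ) (hS0 : 0 ≤ S0)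
    (r0 : Fin n → ℝ) (r : Fin k → Fin n → ℝ)
    (hr0 : ∀ i, 0 ≤ r0 i) (hr : ∀ j i, 0 ≤ r j i)
    (hr0sum : ∑ i, r0 i = 1) (hrsum : ∀ j, ∑ i, r j i = 1)
    (hrpos : ∀ i, 0 < ∑ j, r j i)
    (α β : Fin k → ℝ) (hα : ∀ j, 0 < α j) (hβ : ∀ j, 0 < β j)
    (j : Fin k) (z : ℝ) (hz0 : 0 < z) (hzρ : z < crpRadius ν r β) :
    ∫ x, z ^ crpLoss ν x ∂(crpMeasure S0 r0 r (Function.update α j (α j + 1)) β)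
      = (∫ x, z ^ crpLoss ν x ∂(crpMeasure S0 r0 r α β)) /
        (1 + β j - β j * ∑ h, r j h * z ^ ν h) := by
  simpa only [pow_crpLoss, one_sub_mul_sum_mul_sub_one (hrsum j)] using
    crp_pgf_shift_general hS0 hr0 hr hα hβ (fun i => pow_nonneg hz0.le (ν i))
      (sum_mul_pow_sub_one_lt_of_lt_crpRadius hr hrsum hz0 hzρ) j
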